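/- For every integer m ≥ 1 the following identity between explicit products holds: (3/4)^{m²} / ((−2)^m · (2m)!) · [∏_{1≤i<j≤2m}(j−i) · ∏_{i=1}^{2m+1} ∏_{j=1}^{m} (1+3(2j−i))] / [∏_{i=1}^{m}∏_{j=1}^{m}(m+j−i)(m+j+i) · ∏_{1≤i<j≤m}(j²−i²) · ∏_{m+1≤i<j≤2m}(j²−i²)] = 3 · 2^{m+1} · 4^{−m²} · ∏_{j=1}^{m}(3j−1) · ∏_{k=1}^{m−1} (6k+3)!/(2k+1)! · √( (1/(2m)!) · ∏_{k=1}^{2m} k!/(2m+k)! ). -/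

import Mathlib

open Finset

/-!
Put `F = ∏_{i<j≤2m} (j + i)` and `D = ∏_{i<j≤2m} (j - i)`. The denominator on the left consists of
the three blocks into which `∏_{i<j≤2m} (j² - i²) = F D` falls when the indices are cut at `m`, so
`D` cancels. On the right, `k! / (2m + k)!` is the reciprocal of `∏_{i≤2m} (k + i)`, hence the
radicand is the reciprocal of `(2m)!` times a full square product, which folds along its diagonal
to `F² 2^{2m} (2m)!`; so `F` cancels too. What remains is the rectangle of factors
`1 + 3 (2j - i)`: column `j` runs through the progression `≡ 1 mod 3` from `1 + 3 (2j - 1)` down to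
`1 - 3 (2 (m - j) + 1)`. Pairing the positive part of column `k + 1` with the negative part of
column `m - k` gives all non-multiples of `3` up to `6k + 4`, that is,
`(6k + 4) (6k + 3)! / (3^{2k+1} (2k+1)!)`.
-/

section CommMonoid

variable {M : Type*} [CommMonoid M]

theorem prod_Icc_one_eq_prod_range (f : ℕ → M) (n : ℕ) :
    ∏ i ∈ Icc 1 n, f i = ∏ i ∈ range n, f (i + 1) := by
  rw [← Ico_add_one_right_eq_Icc, range_eq_Ico, prod_Ico_add' f 0 n 1]

theorem prod_range_eq_mul_prod_Icc (f : ℕ → M) {n : ℕ} (hn : 1 ≤ n) :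
    ∏ i ∈ range n, f i = f 0 * ∏ i ∈ Icc 1 (n - 1), f i := by
  obtain ⟨k, rfl⟩ := Nat.exists_eq_add_of_le' hn
  rw [prod_range_succ', Nat.add_sub_cancel, prod_Icc_one_eq_prod_range, mul_comm]

theorem prod_Ico_prod_Ico_of_symm {f : ℕ → ℕ → M} (hf : ∀ i j, f i j = f j i) (a b : ℕ) :
    ∏ j ∈ Ico a b, ∏ i ∈ Ico a b, f j i =
      (∏ j ∈ Ico a b, ∏ i ∈ Ico a j, f j i) ^ 2 * ∏ j ∈ Ico a b, f j j := by
  have hrow : ∀ j ∈ Ico a b, ∏ i ∈ Ico a b, f j i =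
      (∏ i ∈ Ico a j, f j i) * (f j j * ∏ i ∈ Ico (j + 1) b, f i j) := fun j hj => by
    obtain ⟨haj, hjb⟩ := mem_Ico.1 hj
    simp only [fun i => hf i j]
    rw [← prod_eq_prod_Ico_succ_bot hjb, prod_Ico_consecutive _ haj hjb.le]
  have hswap : ∏ j ∈ Ico a b, ∏ i ∈ Ico (j + 1) b, f i j =
      ∏ i ∈ Ico a b, ∏ j ∈ Ico a i, f i j :=
    prod_comm' fun j i => by simp only [mem_Ico]; lia
  rw [prod_congr rfl hrow, prod_mul_distrib, prod_mul_distrib, hswap, sq]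
  ac_rfl

theorem prod_Ico_prod_Ico_consecutive (f : ℕ → ℕ → M) {a b c : ℕ} (hab : a ≤ b) (hbc : b ≤ c) :
    ∏ j ∈ Ico a c, ∏ i ∈ Ico a j, f j i =
      (∏ j ∈ Ico a b, ∏ i ∈ Ico a j, f j i) * (∏ j ∈ Ico b c, ∏ i ∈ Ico a b, f j i) *
        ∏ j ∈ Ico b c, ∏ i ∈ Ico b j, f j i := by
  have hrow : ∀ j ∈ Ico b c,
      ∏ i ∈ Ico a j, f j i = (∏ i ∈ Ico a b, f j i) * ∏ i ∈ Ico b j, f j i :=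
    fun j hj => (prod_Ico_consecutive _ hab (mem_Ico.1 hj).1).symm
  rw [← prod_Ico_consecutive _ hab hbc, prod_congr rfl hrow, prod_mul_distrib, mul_assoc]

end CommMonoid

section CommRing

variable {R : Type*} [CommRing R]

theorem prod_blocks_sq_sub_sq (m : ℕ) :
    (∏ i ∈ Icc 1 m, ∏ j ∈ Icc 1 m, ((m : R) + j - i) * ((m : R) + j + i)) *
        (∏ j ∈ Icc 1 m, ∏ i ∈ Ico 1 j, ((j : R) ^ 2 - (i : R) ^ 2)) *
        (∏ j ∈ Icc (m + 1) (2 * m), ∏ i ∈ Ico (m + 1) j, ((j : R) ^ 2 - (i : R) ^ 2)) =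
      (∏ j ∈ Icc 1 (2 * m), ∏ i ∈ Ico 1 j, ((j : R) + i)) *
        ∏ j ∈ Icc 1 (2 * m), ∏ i ∈ Ico 1 j, ((j : R) - i) := by
  have hsquare : ∏ i ∈ Icc 1 m, ∏ j ∈ Icc 1 m, ((m : R) + j - i) * ((m : R) + j + i) =
      ∏ j ∈ Ico (m + 1) (2 * m + 1), ∏ i ∈ Ico 1 (m + 1), ((j : R) ^ 2 - (i : R) ^ 2) := by
    rw [prod_comm, show 2 * m + 1 = m + 1 + m by ring, add_comm m 1, ← prod_Ico_add' _ 1 (1 + m) m]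
    simp only [← Ico_add_one_right_eq_Icc, add_comm 1 m]
    refine prod_congr rfl fun j _ => prod_congr rfl fun i _ => ?_
    push_cast
    ring
  have hfactor : (∏ j ∈ Icc 1 (2 * m), ∏ i ∈ Ico 1 j, ((j : R) + i)) *
      ∏ j ∈ Icc 1 (2 * m), ∏ i ∈ Ico 1 j, ((j : R) - i) =
        ∏ j ∈ Icc 1 (2 * m), ∏ i ∈ Ico 1 j, ((j : R) ^ 2 - (i : R) ^ 2) := by
    simp only [sq_sub_sq, prod_mul_distrib]
  rw [hsquare, hfactor]
  simp only [← Ico_add_one_right_eq_Icc]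
  rw [prod_Ico_prod_Ico_consecutive _ (Nat.le_add_left 1 m) (by lia : m + 1 ≤ 2 * m + 1)]
  ring

theorem prod_Icc_add_mul_sub (a d : R) (p q : ℕ) :
    ∏ i ∈ Icc 1 (p + q), (a + d * ((p : R) - i)) =
      (∏ t ∈ range p, (a + d * t)) * ∏ t ∈ range q, (a - d * (t + 1)) := by
  rw [prod_Icc_one_eq_prod_range, prod_range_add, ← prod_range_reflect]
  congr 1
  · refine prod_congr rfl fun t ht => ?_
    rw [show p - 1 - t + 1 = p - t by have := mem_range.1 ht; lia,
      Nat.cast_sub (mem_range.1 ht).le, sub_sub_cancel]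
  · refine prod_congr rfl fun t _ => ?_
    push_cast
    ring

theorem prod_Icc_one_add_three_mul_sub {m k : ℕ} (hk : k < m) :
    ∏ i ∈ Icc 1 (2 * m + 1), (1 + 3 * (2 * ((k + 1 : ℕ) : R) - i)) =
      -((∏ t ∈ range (2 * k + 2), (3 * (t : R) + 1)) *
        ∏ t ∈ range (2 * (m - 1 - k) + 1), (3 * (t : R) + 2)) := by
  have hodd : Odd (2 * (m - 1 - k) + 1) := odd_two_mul_add_one _
  calc _ = ∏ i ∈ Icc 1 (2 * k + 2 + (2 * (m - 1 - k) + 1)),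
          (1 + 3 * (((2 * k + 2 : ℕ) : R) - i)) := by
        rw [show 2 * k + 2 + (2 * (m - 1 - k) + 1) = 2 * m + 1 by lia]
        exact prod_congr rfl fun i _ => by push_cast; ring
    _ = (∏ t ∈ range (2 * k + 2), (3 * (t : R) + 1)) *
          ∏ t ∈ range (2 * (m - 1 - k) + 1), -(3 * (t : R) + 2) := by
        rw [prod_Icc_add_mul_sub]
        congr 1 <;> exact prod_congr rfl fun t _ => by ring
    _ = _ := by rw [prod_neg, card_range, hodd.neg_one_pow, neg_one_mul, mul_neg]

theorem prod_Icc_prod_Icc_one_add_three_mul_sub (m : ℕ) :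
    ∏ i ∈ Icc 1 (2 * m + 1), ∏ j ∈ Icc 1 m, (1 + 3 * (2 * (j : R) - i)) =
      (-1) ^ m * ∏ k ∈ range m, ((∏ t ∈ range (2 * k + 2), (3 * (t : R) + 1)) *
        ∏ t ∈ range (2 * k + 1), (3 * (t : R) + 2)) := by
  rw [prod_comm, prod_Icc_one_eq_prod_range,
    prod_congr rfl fun k hk => prod_Icc_one_add_three_mul_sub (mem_range.1 hk), prod_neg,
    card_range, prod_mul_distrib, prod_mul_distrib,
    prod_range_reflect (fun k => ∏ t ∈ range (2 * k + 1), (3 * (t : R) + 2))]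

end CommRing

theorem three_pow_mul_factorial_mul_prod (n : ℕ) :
    3 ^ n * n.factorial * ((∏ t ∈ range n, (3 * t + 1)) * ∏ t ∈ range n, (3 * t + 2)) =
      (3 * n).factorial := by
  induction n with
  | zero => simp
  | succ n ih =>
    simp only [show 3 * (n + 1) = 3 * n + 1 + 1 + 1 by ring, Nat.factorial_succ, ← ih,
      prod_range_succ]
    ring

theorem sum_range_two_mul_add_one (n : ℕ) : ∑ k ∈ range n, (2 * k + 1) = n ^ 2 := by
  induction n with
  | zero => simp
  | succ n ih => rw [sum_range_succ, ih]; ring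

section Semifield

variable {K : Type*} [Semifield K] [CharZero K]

theorem factorial_div_factorial_eq_three_pow_mul_prod (n : ℕ) :
    ((3 * n).factorial : K) / n.factorial =
      3 ^ n * ((∏ t ∈ range n, (3 * (t : K) + 1)) * ∏ t ∈ range n, (3 * (t : K) + 2)) := by
  have hn : (n.factorial : K) ≠ 0 := Nat.cast_ne_zero.2 n.factorial_ne_zero
  rw [div_eq_iff hn, ← three_pow_mul_factorial_mul_prod]
  push_cast
  ring

theorem factorial_div_factorial_add (k n : ℕ) :
    (k.factorial : K) / (n + k).factorial = (∏ i ∈ Icc 1 n, ((k : K) + i))⁻¹ := by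
  have hk : (k.factorial : K) ≠ 0 := Nat.cast_ne_zero.2 k.factorial_ne_zero
  rw [add_comm n k, ← Nat.factorial_mul_ascFactorial, Nat.ascFactorial_eq_prod_range,
    prod_Icc_one_eq_prod_range, Nat.cast_mul, div_mul_cancel_left₀ hk]
  push_cast
  simp only [add_assoc, add_comm (1 : K)]

theorem one_div_factorial_mul_prod_factorial_div_factorial (n : ℕ) :
    1 / (n.factorial : K) * ∏ k ∈ Icc 1 n, (k.factorial : K) / (n + k).factorial =
      ((n.factorial * ∏ j ∈ Icc 1 n, ∏ i ∈ Ico 1 j, ((j : K) + i)) ^ 2 * 2 ^ n)⁻¹ := by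
  have hdiag : ∏ j ∈ Icc 1 n, ((j : K) + j) = 2 ^ n * n.factorial := by
    rw [← prod_Ico_id_eq_factorial, Nat.cast_prod, Ico_add_one_right_eq_Icc]
    simp [← two_mul, prod_mul_distrib]
  have hsquare : ∏ k ∈ Icc 1 n, ∏ i ∈ Icc 1 n, ((k : K) + i) =
      (∏ j ∈ Icc 1 n, ∏ i ∈ Ico 1 j, ((j : K) + i)) ^ 2 * (2 ^ n * n.factorial) := by
    rw [← hdiag, ← Ico_add_one_right_eq_Icc]
    exact prod_Ico_prod_Ico_of_symm (fun i j => add_comm (i : K) j) 1 (n + 1)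
  simp only [factorial_div_factorial_add, prod_inv_distrib, hsquare]
  ring

end Semifield

theorem three_pow_mul_prod_Icc_prod_Icc_one_add_three_mul_sub {K : Type*} [Field K] [CharZero K]
    (m : ℕ) :
    3 ^ (m ^ 2) * ∏ i ∈ Icc 1 (2 * m + 1), ∏ j ∈ Icc 1 m, (1 + 3 * (2 * (j : K) - i)) =
      (-2) ^ m * (∏ j ∈ Icc 1 m, (3 * (j : K) - 1)) *
        ∏ k ∈ range m, ((6 * k + 3).factorial : K) / (2 * k + 1).factorial := by
  have hfactor : ∀ k : ℕ, 3 ^ (2 * k + 1) *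
      ((∏ t ∈ range (2 * k + 2), (3 * (t : K) + 1)) *
        ∏ t ∈ range (2 * k + 1), (3 * (t : K) + 2)) =
      2 * (3 * ((k + 1 : ℕ) : K) - 1) *
        (((6 * k + 3).factorial : K) / (2 * k + 1).factorial) := fun k => by
    rw [show 6 * k + 3 = 3 * (2 * k + 1) by ring, factorial_div_factorial_eq_three_pow_mul_prod,
      prod_range_succ _ (2 * k + 1)]
    push_cast
    ring
  rw [prod_Icc_prod_Icc_one_add_three_mul_sub, ← sum_range_two_mul_add_one, ← prod_pow_eq_pow_sum,
    mul_left_comm, ← prod_mul_distrib, prod_congr rfl fun k _ => hfactor k, prod_mul_distrib,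
    prod_mul_distrib, prod_const, card_range, prod_Icc_one_eq_prod_range, neg_pow (2 : K)]
  ring

theorem prod_triangle_add_pos {R : Type*} [CommSemiring R] [PartialOrder R]
    [IsStrictOrderedRing R] (n : ℕ) : 0 < ∏ j ∈ Icc 1 n, ∏ i ∈ Ico 1 j, ((j : R) + i) :=
  prod_pos fun _ hj => prod_pos fun i _ =>
    add_pos_of_pos_of_nonneg (Nat.cast_pos.2 (mem_Icc.1 hj).1) i.cast_nonneg

theorem prod_triangle_sub_pos {R : Type*} [CommRing R] [PartialOrder R]
    [IsStrictOrderedRing R] (n : ℕ) : 0 < ∏ j ∈ Icc 1 n, ∏ i ∈ Ico 1 j, ((j : R) - i) :=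
  prod_pos fun _ _ => prod_pos fun _ hi => sub_pos.2 (Nat.cast_lt.2 (mem_Ico.1 hi).2)

theorem sqrt_prod_factorial_div_factorial (m : ℕ) :
    Real.sqrt (1 / ((2 * m).factorial : ℝ) *
        ∏ k ∈ Icc 1 (2 * m), (k.factorial : ℝ) / (2 * m + k).factorial) =
      ((2 * m).factorial * (∏ j ∈ Icc 1 (2 * m), ∏ i ∈ Ico 1 j, ((j : ℝ) + i)) * 2 ^ m)⁻¹ := by
  have hF := prod_triangle_add_pos (R := ℝ) (2 * m)
  rw [one_div_factorial_mul_prod_factorial_div_factorial, pow_mul', ← mul_pow, Real.sqrt_inv,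
    Real.sqrt_sq (by positivity)]

/-- The product-form / factorial-form identity for the emptiness formation probability
`τ(m)` of the open XXZ chain at `Δ = 1/2` with zero boundary field. -/
theorem efp_product_factorial_identity (m : ℕ) (hm : 1 ≤ m) :
    ((3 / 4 : ℝ) ^ (m ^ 2) / ((-2 : ℝ) ^ m * ((2 * m).factorial : ℝ))) *
      ((∏ j ∈ Icc 1 (2 * m), ∏ i ∈ Ico 1 j, ((j : ℝ) - (i : ℝ))) *
        (∏ i ∈ Icc 1 (2 * m + 1), ∏ j ∈ Icc 1 m, (1 + 3 * (2 * (j : ℝ) - (i : ℝ))))) /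
      ((∏ i ∈ Icc 1 m, ∏ j ∈ Icc 1 m,
          ((m : ℝ) + (j : ℝ) - (i : ℝ)) * ((m : ℝ) + (j : ℝ) + (i : ℝ))) *
        (∏ j ∈ Icc 1 m, ∏ i ∈ Ico 1 j, ((j : ℝ) ^ 2 - (i : ℝ) ^ 2)) *
        (∏ j ∈ Icc (m + 1) (2 * m), ∏ i ∈ Ico (m + 1) j, ((j : ℝ) ^ 2 - (i : ℝ) ^ 2))) =
    3 * 2 ^ (m + 1) / (4 : ℝ) ^ (m ^ 2) *
      (∏ j ∈ Icc 1 m, (3 * (j : ℝ) - 1)) *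
      (∏ k ∈ Icc 1 (m - 1), ((6 * k + 3).factorial : ℝ) / ((2 * k + 1).factorial : ℝ)) *
      Real.sqrt ((1 / ((2 * m).factorial : ℝ)) *
        ∏ k ∈ Icc 1 (2 * m), (k.factorial : ℝ) / ((2 * m + k).factorial : ℝ)) := by
  have hD := (prod_triangle_sub_pos (R := ℝ) (2 * m)).ne'
  have hN := three_pow_mul_prod_Icc_prod_Icc_one_add_three_mul_sub (K := ℝ) m
  have hfirst : ((6 * 0 + 3).factorial : ℝ) / (2 * 0 + 1).factorial = 6 := by
    norm_num [Nat.factorial]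
  rw [prod_range_eq_mul_prod_Icc _ hm, hfirst] at hN
  rw [prod_blocks_sq_sub_sq, sqrt_prod_factorial_div_factorial, div_pow]
  calc _ = 3 ^ (m ^ 2) * (∏ i ∈ Icc 1 (2 * m + 1), ∏ j ∈ Icc 1 m, (1 + 3 * (2 * (j : ℝ) - i))) /
        (4 ^ (m ^ 2) * (-2) ^ m * (2 * m).factorial *
          ∏ j ∈ Icc 1 (2 * m), ∏ i ∈ Ico 1 j, ((j : ℝ) + i)) := by
        field_simp
    _ = _ := by
        rw [hN]
        field_simp
        ring
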